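/- For all integers L, M, i, j with i ≥ 0, j ≥ 0, L ≥ i+j and M ≥ i+j, the identity \sum_{k=0}^{\min(i,j)} q^{T_{i+j-k} + T_k} [M-i-j+k; k] [M-j; i-k] [L-i; j-k] = q^{T_i + T_j} [L; j] [M-j; i] holds as an identity of polynomials in q, where [m; r] denotes the Gaussian binomial coefficient. -/

import Mathlib

open Finset

/-- `(q)_n = (q;q)_n = ∏_{t=0}^{n-1} (1 - q^{t+1})` in `ℚ(q)`. -/
noncomputable def qPoch (n : ℕ) : RatFunc ℚ :=
  ∏ t ∈ Finset.range n, (1 - (RatFunc.X : RatFunc ℚ) ^ (t + 1))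

/-- The Gaussian (q-)binomial coefficient `[m; r] = (q)_m / ((q)_r (q)_{m-r})` for
`0 ≤ r ≤ m`, and `0` otherwise. -/
noncomputable def qbin (m r : ℤ) : RatFunc ℚ :=
  if 0 ≤ r ∧ r ≤ m then qPoch m.toNat / (qPoch r.toNat * qPoch (m - r).toNat) else 0

/-- `T n = n(n+1)/2`, the n-th triangular number (on `ℤ`, the division is exact). -/
def triZ (n : ℤ) : ℤ := n * (n + 1) / 2

noncomputable def gb : ℕ → ℕ → RatFunc ℚ
  | _, 0 => 1
  | 0, _ + 1 => 0
  | n + 1, k + 1 => gb n k + (RatFunc.X : RatFunc ℚ) ^ (k + 1) * gb n (k + 1)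

lemma gb_zero_right (n : ℕ) : gb n 0 = 1 := by cases n <;> simp [gb]

lemma gb_of_lt : ∀ (n k : ℕ), n < k → gb n k = 0
  | _, 0, h => by omega
  | 0, _ + 1, _ => by simp [gb]
  | n + 1, k + 1, h => by
    simp [gb, gb_of_lt n k (by omega), gb_of_lt n (k + 1) (by omega)]

lemma qPoch_succ (n : ℕ) :
    qPoch (n + 1) = qPoch n * (1 - (RatFunc.X : RatFunc ℚ) ^ (n + 1)) := by
  simp [qPoch, Finset.prod_range_succ]

lemma one_sub_X_pow_ne (n : ℕ) : (1 - (RatFunc.X : RatFunc ℚ) ^ (n + 1)) ≠ 0 := by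
  intro h
  have h2 : algebraMap (Polynomial ℚ) (RatFunc ℚ) (1 - Polynomial.X ^ (n + 1)) = 0 := by
    simpa [RatFunc.algebraMap_X] using h
  rw [map_eq_zero_iff _ (RatFunc.algebraMap_injective ℚ)] at h2
  have h3 := congrArg (Polynomial.eval 0) h2
  simp at h3

lemma qPoch_ne (n : ℕ) : qPoch n ≠ 0 :=
  Finset.prod_ne_zero_iff.mpr fun t _ => one_sub_X_pow_ne t

lemma qPoch_zero : qPoch 0 = 1 := by simp [qPoch]

lemma gb_self (n : ℕ) : gb n n = 1 := by
  induction n with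
  | zero => simp [gb]
  | succ n ih => simp [gb, ih, gb_of_lt n (n + 1) (by omega)]

lemma gb_mul : ∀ (a b : ℕ), gb (a + b) a * (qPoch a * qPoch b) = qPoch (a + b)
  | 0, b => by simp [gb_zero_right, qPoch_zero]
  | a + 1, 0 => by simp [gb_self, qPoch_zero]
  | a + 1, b + 1 => by
    have h1 := gb_mul a (b + 1)
    have h2 := gb_mul (a + 1) b
    have e1 : a + 1 + (b + 1) = (a + b + 1) + 1 := by ring
    rw [show a + (b + 1) = a + b + 1 by ring] at h1
    rw [show a + 1 + b = a + b + 1 by ring] at h2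
    rw [e1, gb, qPoch_succ (a + b + 1)]
    rw [qPoch_succ b] at h1 ⊢
    rw [qPoch_succ a] at h2 ⊢
    linear_combination (1 - (RatFunc.X : RatFunc ℚ) ^ (a + 1)) * h1 +
      (RatFunc.X : RatFunc ℚ) ^ (a + 1) * (1 - (RatFunc.X : RatFunc ℚ) ^ (b + 1)) * h2

lemma qbin_eq (n k : ℕ) : qbin n k = gb n k := by
  unfold qbin
  by_cases h : k ≤ n
  · obtain ⟨b, rfl⟩ := Nat.exists_eq_add_of_le h
    rw [if_pos (by constructor <;> push_cast <;> omega)]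
    have e : (((k + b : ℕ) : ℤ) - (k : ℤ)).toNat = b := by omega
    rw [e, Int.toNat_natCast, Int.toNat_natCast, ← gb_mul k b]
    exact mul_div_cancel_right₀ _ (mul_ne_zero (qPoch_ne _) (qPoch_ne _))
  · rw [if_neg (by omega), gb_of_lt n k (by omega)]

/-- q-Vandermonde. -/
lemma q_vandermonde (n i : ℕ) : ∀ j : ℕ,
    ∑ p ∈ Finset.HasAntidiagonal.antidiagonal j,
      (RatFunc.X : RatFunc ℚ) ^ ((i - p.1) * p.2) * gb i p.1 * gb n p.2 = gb (i + n) j := by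
  induction i with
  | zero =>
    intro j
    rw [Finset.sum_eq_single (0, j)]
    · simp [gb_zero_right]
    · rintro ⟨a, b⟩ _ h2
      rcases a with _ | a
      · simp_all
      · simp [gb]
    · simp
  | succ i ih =>
    intro j
    rcases j with _ | j
    · simp [gb_zero_right]
    · have h1 := ih j
      have h2 := ih (j + 1)
      rw [show i + 1 + n = (i + n) + 1 by ring, gb, ← h1, ← h2]
      rw [Finset.Nat.sum_antidiagonal_succ, Finset.Nat.sum_antidiagonal_succ, mul_add ((RatFunc.X : RatFunc ℚ) ^ (j + 1)),
        Finset.mul_sum]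
      rw [add_left_comm, ← Finset.sum_add_distrib]
      congr 1
      · simp only [gb_zero_right, Nat.sub_zero]
        ring
      · refine Finset.sum_congr rfl ?_
        rintro ⟨a, b⟩ hp
        have hp' : a + b = j := by simpa using hp
        simp only [gb, Nat.add_sub_add_right]
        by_cases h : a + 1 ≤ i
        · obtain ⟨c, rfl⟩ := Nat.exists_eq_add_of_le h
          subst hp'
          rw [show a + 1 + c - a = c + 1 by omega, show a + 1 + c - (a + 1) = c by omega]
          ring
        · rw [gb_of_lt i (a + 1) (by omega)]
          ring

lemma two_triZ (n : ℤ) : 2 * triZ n = n * (n + 1) := by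
  unfold triZ
  exact Int.mul_ediv_cancel' (Int.even_mul_succ_self n).two_dvd

lemma triZ_split (k a b : ℤ) :
    triZ (k + a + b) + triZ k = triZ (k + a) + triZ (k + b) + a * b := by
  have h : 2 * (triZ (k + a + b) + triZ k) = 2 * (triZ (k + a) + triZ (k + b) + a * b) := by
    linear_combination two_triZ (k + a + b) + two_triZ k - two_triZ (k + a) - two_triZ (k + b)
  omega

lemma gb_trinomial (m k a : ℕ) :
    gb (m + k) k * gb (m + k + a) a = gb (m + k + a) (k + a) * gb (k + a) k := by
  have h1 := gb_mul k m
  have h2 := gb_mul a (m + k)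
  have h3 := gb_mul (k + a) m
  have h4 := gb_mul k a
  rw [show k + m = m + k by ring] at h1
  rw [show a + (m + k) = m + k + a by ring] at h2
  rw [show k + a + m = m + k + a by ring] at h3
  have n1 := qPoch_ne k
  have n2 := qPoch_ne a
  have n3 := qPoch_ne m
  apply mul_right_cancel₀ (mul_ne_zero n1 (mul_ne_zero n2 n3))
  rw [← h1] at h2
  rw [← h4, ← h2] at h3
  linear_combination -h3

/-- Identity (4.4): for `i, j ≥ 0` and `L, M ≥ i + j`,
`∑_{k=0}^{min(i,j)} q^{T_{i+j-k}+T_k} [M-i-j+k; k] [M-j; i-k] [L-i; j-k]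
  = q^{T_i+T_j} [L; j] [M-j; i]`. -/
theorem double_bounded_key_identity_triangular (L M i j : ℤ)
    (hi : 0 ≤ i) (hj : 0 ≤ j) (hL : i + j ≤ L) (hM : i + j ≤ M) :
    ∑ k ∈ Finset.Icc (0 : ℤ) (min i j),
      (RatFunc.X : RatFunc ℚ) ^ (triZ (i + j - k) + triZ k) *
        qbin (M - i - j + k) k * qbin (M - j) (i - k) * qbin (L - i) (j - k) =
    (RatFunc.X : RatFunc ℚ) ^ (triZ i + triZ j) * (qbin L j * qbin (M - j) i) := by
  lift i to ℕ using hi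
  lift j to ℕ using hj
  obtain ⟨m, hm⟩ := Int.le.dest hM
  obtain ⟨n, hn⟩ : ∃ n : ℕ, (i : ℤ) + n = L := Int.le.dest (by omega)
  subst hm hn
  have hX : (RatFunc.X : RatFunc ℚ) ≠ 0 := RatFunc.X_ne_zero
  rw [show (i : ℤ) + j + m - j = ((m + i : ℕ) : ℤ) by push_cast; ring,
    show (i : ℤ) + n = ((i + n : ℕ) : ℤ) by push_cast; ring, qbin_eq, qbin_eq,
    ← q_vandermonde, Finset.Nat.sum_antidiagonal_eq_sum_range_succ_mk, Finset.sum_mul,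
    Finset.mul_sum]
  symm
  have hsub : Finset.range (min i j + 1) ⊆ Finset.range (j + 1) := by
    intro x hx
    simp only [Finset.mem_range] at *
    omega
  rw [← Finset.sum_subset hsub]
  · refine Finset.sum_bij (fun (k : ℕ) _ => (k : ℤ)) ?_ ?_ ?_ ?_
    · intro k hk
      simp only [Finset.mem_range, Finset.mem_Icc] at *
      omega
    · intro a _ b _ h
      exact_mod_cast h
    · intro b hb
      simp only [Finset.mem_Icc] at hb
      refine ⟨b.toNat, ?_, ?_⟩
      · simp only [Finset.mem_range]
        omega
      · omega
    · intro k hk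
      simp only [Finset.mem_range] at hk
      obtain ⟨a, rfl⟩ := Nat.exists_eq_add_of_le (show k ≤ i by omega)
      obtain ⟨b, rfl⟩ := Nat.exists_eq_add_of_le (show k ≤ j by omega)
      rw [show ((k + a : ℕ) : ℤ) + (k + b : ℕ) + m - (k + a : ℕ) - (k + b : ℕ) + k
          = ((m + k : ℕ) : ℤ) by push_cast; ring,
        show ((k + a : ℕ) : ℤ) - k = (a : ℕ) by push_cast; ring,
        show ((k + b : ℕ) : ℤ) - k = (b : ℕ) by push_cast; ring,
        show ((k + a + n : ℕ) : ℤ) - (k + a : ℕ) = (n : ℕ) by push_cast; ring,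
        show ((k + a : ℕ) : ℤ) + (k + b : ℕ) - k = k + a + b by push_cast; ring,
        triZ_split, qbin_eq, qbin_eq, qbin_eq, zpow_add₀ hX _ ((a : ℤ) * b)]
      simp only [Nat.add_sub_cancel_left]
      rw [← Nat.cast_mul, zpow_natCast, ← add_assoc m k a]
      push_cast
      have := gb_trinomial m k a
      linear_combination -((RatFunc.X : RatFunc ℚ) ^ (triZ (k + a) + triZ (k + b)) *
        (RatFunc.X : RatFunc ℚ) ^ (a * b) * gb n b) * this
  · intro k hk hk'
    simp only [Finset.mem_range] at hk hk'
    simp [gb_of_lt i k (by omega)]
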